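/- arXiv:1810.10695 — 2 statements merged into one kernel-verified Lean document; each statement's English description precedes it below -/
import Mathlib

section
/- (Preservation of the I-eigen-gap) Suppose for each k = 1,…,n there are differentiable functions λ_k : [0,1] → ℝ and ψ_k : [0,1] → ℝ^V with W(t)ψ_k(t) = λ_k(t)D(t)ψ_k(t), ψ_k(t)ᵀD(t)ψ_j(t) = δ_{kj}, and |λ_k(t)| ≤ 1 for all t∈[0,1]. Let I ⊆ {1,…,n} and define the I-eigen-gap Δ(t) := min_{i∈I, j∉I} |λ_i(t) − λ_j(t)|. If for some constant Δ > 0 one has Δ(0) ≥ 2Δ and C_conn/d0_low ≤ Δ/8, then Δ(t) ≥ Δ for all t∈[0,1]. -/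
open Finset

/-!
Write `D(W)` for the degree matrix of `W`. If `W ψ = λ D(W) ψ` and `ψᵀ D(W) ψ = 1` along
`W = W₀ + tE`, the Hellmann–Feynman formula gives `λ' = ψᵀ (E - λ D(E)) ψ`. For symmetric `E ≥ 0`
the Laplacian `D(E) - E` and the signless Laplacian `D(E) + E` are positive semidefinite, so
`|ψᵀ E ψ| ≤ ψᵀ D(E) ψ`; and `D(E) ≤ r D(W₀) ≤ r D(W)` gives `ψᵀ D(E) ψ ≤ r`. With `|λ| ≤ 1` every
eigenvalue therefore moves at speed at most `2r`, and a gap between two of them shrinks at speed at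
most `4r`.
-/

section WeightedGraph

open Matrix Set Filter Topology

section HellmannFeynman

variable {n 𝕜 : Type*} [Fintype n]

/- Every term on the right carries a difference of matrices and none carries `v - u`, so its
difference quotient converges without differentiating the eigenvector. -/
lemma eigenvalue_sub_mul_dotProduct_mulVec [CommRing 𝕜] {A₀ M₀ A M : Matrix n n 𝕜}
    (hA₀ : A₀.IsSymm) (hM₀ : M₀.IsSymm) {μ ν : 𝕜} {u v : n → 𝕜}
    (hu : A₀ *ᵥ u = μ • M₀ *ᵥ u) (hv : A *ᵥ v = ν • M *ᵥ v) :
    (ν - μ) * (u ⬝ᵥ M *ᵥ v) = u ⬝ᵥ (A - A₀ - μ • (M - M₀)) *ᵥ v := by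
  have hleft : u ⬝ᵥ A₀ *ᵥ v = μ * (u ⬝ᵥ M₀ *ᵥ v) := by
    rw [dotProduct_mulVec, dotProduct_mulVec, ← mulVec_transpose, ← mulVec_transpose, hA₀.eq,
      hM₀.eq, hu, smul_dotProduct, smul_eq_mul]
  simp only [sub_mulVec, smul_mulVec, dotProduct_sub, dotProduct_smul, smul_eq_mul, hv, hleft]
  ring

lemma tendsto_dotProduct_mulVec [NonUnitalNonAssocSemiring 𝕜] [TopologicalSpace 𝕜]
    [ContinuousAdd 𝕜] [ContinuousMul 𝕜] {α : Type*} {l : Filter α} {F : α → Matrix n n 𝕜}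
    {N : Matrix n n 𝕜} {w : α → n → 𝕜} {v : n → 𝕜} (hF : Tendsto F l (𝓝 N))
    (hw : Tendsto w l (𝓝 v)) (u : n → 𝕜) :
    Tendsto (fun a => u ⬝ᵥ F a *ᵥ w a) l (𝓝 (u ⬝ᵥ N *ᵥ v)) := by
  have hform : Continuous fun p : Matrix n n 𝕜 × (n → 𝕜) => u ⬝ᵥ p.1 *ᵥ p.2 := by fun_prop
  simpa only [Function.comp_def] using (hform.tendsto (N, v)).comp (hF.prodMk_nhds hw)

theorem hasDerivWithinAt_generalizedEigenvalue [NontriviallyNormedField 𝕜]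
    {A M : 𝕜 → Matrix n n 𝕜} {A' M' : Matrix n n 𝕜} {lam : 𝕜 → 𝕜} {ψ : 𝕜 → n → 𝕜}
    {S : Set 𝕜} {t : 𝕜} (ht : t ∈ S)
    (hA : ∀ i j, HasDerivWithinAt (A · i j) (A' i j) S t)
    (hM : ∀ i j, HasDerivWithinAt (M · i j) (M' i j) S t)
    (hAsymm : (A t).IsSymm) (hMsymm : (M t).IsSymm) (hψ : ContinuousWithinAt ψ S t)
    (heig : ∀ s ∈ S, A s *ᵥ ψ s = lam s • M s *ᵥ ψ s) (hne : ψ t ⬝ᵥ M t *ᵥ ψ t ≠ 0) :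
    HasDerivWithinAt lam
      ((ψ t ⬝ᵥ (A' - lam t • M') *ᵥ ψ t) / (ψ t ⬝ᵥ M t *ᵥ ψ t)) S t := by
  have hψ_lim : Tendsto ψ (𝓝[S \ {t}] t) (𝓝 (ψ t)) := hψ.mono sdiff_subset
  have hM_lim : Tendsto M (𝓝[S \ {t}] t) (𝓝 (M t)) := tendsto_pi_nhds.mpr fun i =>
    tendsto_pi_nhds.mpr fun j => (hM i j).continuousWithinAt.mono sdiff_subset
  have hA_slope : Tendsto (slope A t) (𝓝[S \ {t}] t) (𝓝 A') := tendsto_pi_nhds.mpr fun i =>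
    tendsto_pi_nhds.mpr fun j => hasDerivWithinAt_iff_tendsto_slope.mp (hA i j)
  have hM_slope : Tendsto (slope M t) (𝓝[S \ {t}] t) (𝓝 M') := tendsto_pi_nhds.mpr fun i =>
    tendsto_pi_nhds.mpr fun j => hasDerivWithinAt_iff_tendsto_slope.mp (hM i j)
  have hden : Tendsto (fun s => ψ t ⬝ᵥ M s *ᵥ ψ s) (𝓝[S \ {t}] t) (𝓝 (ψ t ⬝ᵥ M t *ᵥ ψ t)) :=
    tendsto_dotProduct_mulVec hM_lim hψ_lim (ψ t)
  have hnum : Tendsto (fun s => ψ t ⬝ᵥ (slope A t s - lam t • slope M t s) *ᵥ ψ s)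
      (𝓝[S \ {t}] t) (𝓝 (ψ t ⬝ᵥ (A' - lam t • M') *ᵥ ψ t)) :=
    tendsto_dotProduct_mulVec (hA_slope.sub (hM_slope.const_smul (lam t))) hψ_lim (ψ t)
  rw [hasDerivWithinAt_iff_tendsto_slope]
  refine (hnum.div hden hne).congr' ?_
  filter_upwards [hden.eventually_ne hne, self_mem_nhdsWithin] with s hs hsS
  rw [Pi.div_apply, div_eq_iff hs, slope_def_field, div_mul_eq_mul_div,
    eigenvalue_sub_mul_dotProduct_mulVec hAsymm hMsymm (heig t ht) (heig s hsS.1),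
    slope_def_module, slope_def_module, smul_comm (lam t), ← smul_sub, smul_mulVec,
    dotProduct_smul, smul_eq_mul, inv_mul_eq_div]

end HellmannFeynman

variable {V : Type*} [Fintype V]

section DegreeMatrix

variable [DecidableEq V] {R : Type*}

/-- The diagonal matrix `D` of vertex degrees, i.e. row sums, of a weighted graph with weight
matrix `W`. -/
def degreeMatrix [AddCommMonoid R] (W : Matrix V V R) : Matrix V V R :=
  diagonal fun x => ∑ y, W x y

lemma isSymm_degreeMatrix [AddCommMonoid R] (W : Matrix V V R) : (degreeMatrix W).IsSymm :=
  isSymm_diagonal _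

lemma degreeMatrix_add_smul [Semiring R] (W E : Matrix V V R) (t : R) :
    degreeMatrix (W + t • E) = degreeMatrix W + t • degreeMatrix E := by
  simp only [degreeMatrix, ← diagonal_smul, diagonal_add]
  congr 1
  ext x
  simp [sum_add_distrib, mul_sum]

lemma dotProduct_degreeMatrix_mulVec [CommSemiring R] (W : Matrix V V R) (u : V → R) :
    u ⬝ᵥ degreeMatrix W *ᵥ u = ∑ x, (∑ y, W x y) * u x ^ 2 := by
  simp only [dotProduct, degreeMatrix, mulVec_diagonal]
  exact sum_congr rfl fun x _ => by ring

lemma two_mul_dotProduct_degreeMatrix_mulVec [CommSemiring R] {E : Matrix V V R}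
    (hE : E.IsSymm) (u : V → R) :
    2 * (u ⬝ᵥ degreeMatrix E *ᵥ u) = ∑ x, ∑ y, E x y * (u x ^ 2 + u y ^ 2) := by
  have hswap : ∑ x, ∑ y, E x y * u y ^ 2 = ∑ x, ∑ y, E x y * u x ^ 2 := by
    rw [sum_comm]
    simp only [hE.apply]
  simp only [dotProduct_degreeMatrix_mulVec, mul_add, sum_add_distrib, hswap, sum_mul, two_mul]

variable [CommRing R] [LinearOrder R] [IsStrictOrderedRing R]

theorem abs_dotProduct_mulVec_le_degreeMatrix {E : Matrix V V R} (hE : E.IsSymm)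
    (hE₀ : ∀ x y, 0 ≤ E x y) (u : V → R) :
    |u ⬝ᵥ E *ᵥ u| ≤ u ⬝ᵥ degreeMatrix E *ᵥ u := by
  have hterm (x y : V) : |2 * (u x * (E x y * u y))| ≤ E x y * (u x ^ 2 + u y ^ 2) := by
    calc |2 * (u x * (E x y * u y))| = E x y * (2 * |u x| * |u y|) := by
          simp only [abs_mul, abs_of_nonneg (hE₀ x y), abs_two]
          ring
      _ ≤ E x y * (u x ^ 2 + u y ^ 2) := by
          rw [← sq_abs (u x), ← sq_abs (u y)]
          exact mul_le_mul_of_nonneg_left (two_mul_le_add_sq _ _) (hE₀ x y)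
  refine le_of_mul_le_mul_left ?_ (zero_lt_two (α := R))
  calc 2 * |u ⬝ᵥ E *ᵥ u| = |∑ x, ∑ y, 2 * (u x * (E x y * u y))| := by
        rw [← abs_two, ← abs_mul]
        simp only [dotProduct, mulVec, mul_sum, abs_two]
    _ ≤ ∑ x, ∑ y, E x y * (u x ^ 2 + u y ^ 2) :=
        (abs_sum_le_sum_abs _ _).trans <| sum_le_sum fun x _ =>
          (abs_sum_le_sum_abs _ _).trans <| sum_le_sum fun y _ => hterm x y
    _ = 2 * (u ⬝ᵥ degreeMatrix E *ᵥ u) := (two_mul_dotProduct_degreeMatrix_mulVec hE u).symm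

lemma dotProduct_degreeMatrix_mulVec_le {E W : Matrix V V R} {r : R}
    (h : ∀ x, ∑ y, E x y ≤ r * ∑ y, W x y) (u : V → R) :
    u ⬝ᵥ degreeMatrix E *ᵥ u ≤ r * (u ⬝ᵥ degreeMatrix W *ᵥ u) := by
  simp only [dotProduct_degreeMatrix_mulVec]
  rw [mul_sum]
  refine sum_le_sum fun x _ => ?_
  rw [← mul_assoc]
  exact mul_le_mul_of_nonneg_right (h x) (sq_nonneg _)

lemma abs_dotProduct_sub_smul_degreeMatrix_mulVec_le {E : Matrix V V R} (hE : E.IsSymm)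
    (hE₀ : ∀ x y, 0 ≤ E x y) (μ : R) (u : V → R) :
    |u ⬝ᵥ (E - μ • degreeMatrix E) *ᵥ u| ≤ (1 + |μ|) * (u ⬝ᵥ degreeMatrix E *ᵥ u) := by
  have hEu := abs_dotProduct_mulVec_le_degreeMatrix hE hE₀ u
  have hDu : |u ⬝ᵥ degreeMatrix E *ᵥ u| = u ⬝ᵥ degreeMatrix E *ᵥ u :=
    abs_of_nonneg ((abs_nonneg _).trans hEu)
  calc |u ⬝ᵥ (E - μ • degreeMatrix E) *ᵥ u|
      = |u ⬝ᵥ E *ᵥ u - μ * (u ⬝ᵥ degreeMatrix E *ᵥ u)| := by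
        rw [sub_mulVec, smul_mulVec, dotProduct_sub, dotProduct_smul, smul_eq_mul]
    _ ≤ |u ⬝ᵥ E *ᵥ u| + |μ| * (u ⬝ᵥ degreeMatrix E *ᵥ u) := by
        simpa only [abs_mul, hDu] using
          abs_sub (u ⬝ᵥ E *ᵥ u) (μ * (u ⬝ᵥ degreeMatrix E *ᵥ u))
    _ ≤ (1 + |μ|) * (u ⬝ᵥ degreeMatrix E *ᵥ u) := by
        rw [one_add_mul]
        exact add_le_add_left hEu _

end DegreeMatrix

lemma rowSum_le_sum_cross {R : Type*} [AddCommMonoid R] [PartialOrder R] [IsOrderedAddMonoid R]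
    {B C : Finset V} (hdisj : Disjoint B C) {E : Matrix V V R} (hE : E.IsSymm)
    (hE₀ : ∀ x y, 0 ≤ E x y)
    (hcross : ∀ x y, ¬((x ∈ B ∧ y ∈ C) ∨ (x ∈ C ∧ y ∈ B)) → E x y = 0) (x : V) :
    ∑ y, E x y ≤ ∑ x ∈ B, ∑ y ∈ C, E x y := by
  have hrow_nonneg : ∀ b ∈ B, 0 ≤ ∑ c ∈ C, E b c := fun b _ => sum_nonneg fun c _ => hE₀ b c
  by_cases hxB : x ∈ B
  · have hxC : x ∉ C := Finset.disjoint_left.mp hdisj hxB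
    calc ∑ y, E x y = ∑ y ∈ C, E x y :=
          (sum_subset (subset_univ C) fun y _ hy => hcross x y (by tauto)).symm
      _ ≤ ∑ b ∈ B, ∑ c ∈ C, E b c := single_le_sum hrow_nonneg hxB
  by_cases hxC : x ∈ C
  · calc ∑ y, E x y = ∑ y ∈ B, E x y :=
          (sum_subset (subset_univ B) fun y _ hy => hcross x y (by tauto)).symm
      _ = ∑ b ∈ B, E b x := sum_congr rfl fun b _ => hE.apply b x
      _ ≤ ∑ b ∈ B, ∑ c ∈ C, E b c :=
          sum_le_sum fun b _ => single_le_sum (fun c _ => hE₀ b c) hxC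
  · calc ∑ y, E x y = 0 := sum_eq_zero fun y _ => hcross x y (by tauto)
      _ ≤ ∑ b ∈ B, ∑ c ∈ C, E b c := sum_nonneg hrow_nonneg

lemma rowSum_le_mul_rowSum_of_cross {R : Type*} [Field R] [LinearOrder R] [IsStrictOrderedRing R]
    {B C : Finset V} (hdisj : Disjoint B C) {E W : Matrix V V R} (hE : E.IsSymm)
    (hE₀ : ∀ x y, 0 ≤ E x y)
    (hcross : ∀ x y, ¬((x ∈ B ∧ y ∈ C) ∨ (x ∈ C ∧ y ∈ B)) → E x y = 0) {d r : R} (hd : 0 < d)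
    (hW : ∀ x, d ≤ ∑ y, W x y) (hr : (∑ x ∈ B, ∑ y ∈ C, E x y) / d ≤ r) (x : V) :
    ∑ y, E x y ≤ r * ∑ y, W x y := by
  have hr₀ : 0 ≤ r :=
    (div_nonneg (sum_nonneg fun b _ => sum_nonneg fun c _ => hE₀ b c) hd.le).trans hr
  calc ∑ y, E x y ≤ ∑ b ∈ B, ∑ c ∈ C, E b c := rowSum_le_sum_cross hdisj hE hE₀ hcross x
    _ ≤ r * d := (div_le_iff₀ hd).mp hr
    _ ≤ r * ∑ y, W x y := mul_le_mul_of_nonneg_left (hW x) hr₀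

lemma rowSum_le_mul_rowSum_add_smul {R : Type*} [CommRing R] [LinearOrder R]
    [IsStrictOrderedRing R] {W₀ E : Matrix V V R} (hE₀ : ∀ x y, 0 ≤ E x y) {r t : R} (hr : 0 ≤ r)
    (hdeg : ∀ x, ∑ y, E x y ≤ r * ∑ y, W₀ x y) (ht : 0 ≤ t) (x : V) :
    ∑ y, E x y ≤ r * ∑ y, (W₀ + t • E) x y :=
  (hdeg x).trans <| mul_le_mul_of_nonneg_left
    (sum_le_sum fun y _ => le_add_of_nonneg_right (mul_nonneg ht (hE₀ x y))) hr

variable [DecidableEq V]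

/-- `(μ, u)` solves the generalized eigenvalue problem `W u = μ D u` of the weighted graph with
weight matrix `W` and degree matrix `D`, with the normalization `uᵀ D u = 1`. -/
structure IsNormalizedEigenpair (W : Matrix V V ℝ) (μ : ℝ) (u : V → ℝ) : Prop where
  mulVec_eq : W *ᵥ u = μ • degreeMatrix W *ᵥ u
  dotProduct_eq_one : u ⬝ᵥ degreeMatrix W *ᵥ u = 1

lemma isNormalizedEigenpair_iff {W : Matrix V V ℝ} {μ : ℝ} {u : V → ℝ} :
    IsNormalizedEigenpair W μ u ↔
      (∀ x, ∑ y, W x y * u y = μ * ((∑ y, W x y) * u x)) ∧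
        ∑ x, u x * (∑ y, W x y) * u x = 1 := by
  have hsum : ∑ x, u x * (∑ y, W x y) * u x = u ⬝ᵥ degreeMatrix W *ᵥ u := by
    rw [dotProduct_degreeMatrix_mulVec]
    exact sum_congr rfl fun x _ => by ring
  have heq : W *ᵥ u = μ • degreeMatrix W *ᵥ u ↔
      ∀ x, ∑ y, W x y * u y = μ * ((∑ y, W x y) * u x) := by
    simp only [funext_iff, Pi.smul_apply, smul_eq_mul, degreeMatrix, mulVec_diagonal]
    rfl
  rw [hsum, ← heq]
  exact ⟨fun h => ⟨h.1, h.2⟩, fun h => ⟨h.1, h.2⟩⟩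

section Deformation

variable {W₀ E : Matrix V V ℝ} {S : Set ℝ} {r : ℝ}

theorem hasDerivWithinAt_eigenvalue (hW₀ : W₀.IsSymm) (hE : E.IsSymm)
    {lam : ℝ → ℝ} {ψ : ℝ → V → ℝ} {t : ℝ} (ht : t ∈ S) (hψ : ContinuousWithinAt ψ S t)
    (heig : ∀ s ∈ S, IsNormalizedEigenpair (W₀ + s • E) (lam s) (ψ s)) :
    HasDerivWithinAt lam (ψ t ⬝ᵥ (E - lam t • degreeMatrix E) *ᵥ ψ t) S t := by
  have hline (A F : Matrix V V ℝ) (x y : V) :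
      HasDerivWithinAt (fun s : ℝ => (A + s • F) x y) (F x y) S t := by
    simpa only [id, one_mul, Matrix.add_apply, Matrix.smul_apply, smul_eq_mul] using
      ((hasDerivWithinAt_id t S).mul_const (F x y)).const_add (A x y)
  have hdeg (x y : V) : HasDerivWithinAt (fun s : ℝ => degreeMatrix (W₀ + s • E) x y)
      (degreeMatrix E x y) S t := by
    simpa only [degreeMatrix_add_smul] using hline (degreeMatrix W₀) (degreeMatrix E) x y
  have hnorm := (heig t ht).dotProduct_eq_one
  simpa only [hnorm, div_one] using
    hasDerivWithinAt_generalizedEigenvalue ht (hline W₀ E) hdeg (hW₀.add (hE.smul t))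
      (isSymm_degreeMatrix _) hψ (fun s hs => (heig s hs).mulVec_eq) (hnorm ▸ one_ne_zero)

theorem abs_eigenvalue_sub_le (hW₀ : W₀.IsSymm) (hE : E.IsSymm)
    (hE₀ : ∀ x y, 0 ≤ E x y) (hr : 0 ≤ r) (hdeg : ∀ x, ∑ y, E x y ≤ r * ∑ y, W₀ x y)
    (hS : Convex ℝ S) (hS₀ : S ⊆ Ici 0) {lam : ℝ → ℝ} {ψ : ℝ → V → ℝ} {K : ℝ}
    (hψ : ContinuousOn ψ S) (heig : ∀ s ∈ S, IsNormalizedEigenpair (W₀ + s • E) (lam s) (ψ s))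
    (hlam : ∀ s ∈ S, |lam s| ≤ K) {s t : ℝ} (hs : s ∈ S) (ht : t ∈ S) :
    |lam t - lam s| ≤ (1 + K) * r * |t - s| := by
  refine hS.norm_image_sub_le_of_norm_hasDerivWithin_le
    (fun x hx => hasDerivWithinAt_eigenvalue hW₀ hE hx (hψ x hx) heig)
    (fun x hx => ?_) hs ht
  have hdegx := rowSum_le_mul_rowSum_add_smul hE₀ hr hdeg (hS₀ hx)
  calc |ψ x ⬝ᵥ (E - lam x • degreeMatrix E) *ᵥ ψ x|
      ≤ (1 + |lam x|) * (ψ x ⬝ᵥ degreeMatrix E *ᵥ ψ x) :=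
        abs_dotProduct_sub_smul_degreeMatrix_mulVec_le hE hE₀ _ _
    _ ≤ (1 + |lam x|) * (r * (ψ x ⬝ᵥ degreeMatrix (W₀ + x • E) *ᵥ ψ x)) :=
        mul_le_mul_of_nonneg_left (dotProduct_degreeMatrix_mulVec_le hdegx _) (by positivity)
    _ ≤ (1 + K) * r := by
        rw [(heig x hx).dotProduct_eq_one, mul_one]
        gcongr
        exact hlam x hx

theorem I_eigen_gap_preservation_general {ι : Type*} (hW₀ : W₀.IsSymm) (hE : E.IsSymm)
    (hE₀ : ∀ x y, 0 ≤ E x y) (hr : 0 ≤ r) (hdeg : ∀ x, ∑ y, E x y ≤ r * ∑ y, W₀ x y)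
    {T : ℝ} {lam : ι → ℝ → ℝ} {ψ : ι → ℝ → V → ℝ} (hψ : ∀ k, ContinuousOn (ψ k) (Set.Icc 0 T))
    (heig : ∀ k, ∀ t ∈ Set.Icc 0 T, IsNormalizedEigenpair (W₀ + t • E) (lam k t) (ψ k t))
    (hlam : ∀ k, ∀ t ∈ Set.Icc 0 T, |lam k t| ≤ 1) {I : Set ι} {δ : ℝ}
    (hgap : ∀ i ∈ I, ∀ j ∉ I, δ ≤ |lam i 0 - lam j 0|) :
    ∀ t ∈ Set.Icc 0 T, ∀ i ∈ I, ∀ j ∉ I, δ - 4 * r * t ≤ |lam i t - lam j t| := by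
  intro t ht i hi j hj
  have hmove (k : ι) : |lam k t - lam k 0| ≤ 2 * r * t := by
    simpa only [one_add_one_eq_two, sub_zero, abs_of_nonneg ht.1] using
      abs_eigenvalue_sub_le hW₀ hE hE₀ hr hdeg (convex_Icc 0 T) (fun s hs => hs.1)
        (hψ k) (heig k) (hlam k) (left_mem_Icc.mpr (ht.1.trans ht.2)) ht
  have htriangle : |lam i 0 - lam j 0| ≤
      |lam i t - lam i 0| + |lam i t - lam j t| + |lam j t - lam j 0| := by
    rw [abs_sub_comm (lam i t) (lam i 0)]
    exact (abs_sub_le _ (lam j t) _).trans (by gcongr; exact abs_sub_le _ _ _)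
  linarith [hgap i hi j hj, hmove i, hmove j]

end Deformation

end WeightedGraph

/-- Preservation of the I-eigen-gap: in the setting of the deformation
`W(t) = W0 + tE` with differentiable `D(t)`-orthonormal eigenpairs `(λ_k, ψ_k)` and
`|λ_k(t)| ≤ 1`, if the initial `I`-eigen-gap satisfies `Δ(0) ≥ 2Δ` and
`C_conn/d0low ≤ Δ/8`, then `Δ(t) ≥ Δ` for all `t ∈ [0,1]`, i.e.
`|λ_i(t) − λ_j(t)| ≥ Δ` for all `i ∈ I`, `j ∉ I`. -/
theorem I_eigen_gap_preservation
    {V : Type*} [Fintype V] [DecidableEq V] [Nonempty V]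
    (B C : Finset V) (hdisj : Disjoint B C) (hunion : B ∪ C = Finset.univ)
    (hBne : B.Nonempty) (hCne : C.Nonempty)
    (W0 E : Matrix V V ℝ)
    (hW0symm : W0.IsSymm) (hW0nonneg : ∀ x y, 0 ≤ W0 x y)
    (hW0cross : ∀ x y, ((x ∈ B ∧ y ∈ C) ∨ (x ∈ C ∧ y ∈ B)) → W0 x y = 0)
    (hEsymm : E.IsSymm) (hEnonneg : ∀ x y, 0 ≤ E x y)
    (hEcross : ∀ x y, ¬((x ∈ B ∧ y ∈ C) ∨ (x ∈ C ∧ y ∈ B)) → E x y = 0)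
    (Cconn : ℝ) (hCconn : Cconn = ∑ x ∈ B, ∑ y ∈ C, E x y)
    (d0low : ℝ)
    (hd0low : d0low = Finset.univ.inf' Finset.univ_nonempty (fun x => ∑ y, W0 x y))
    (hd0pos : 0 < d0low)
    (lam : V → ℝ → ℝ) (ψ : V → ℝ → V → ℝ)
    (hlamdiff : ∀ k, DifferentiableOn ℝ (lam k) (Set.Icc (0 : ℝ) 1))
    (hψdiff : ∀ k x, DifferentiableOn ℝ (fun s => ψ k s x) (Set.Icc (0 : ℝ) 1))
    (heig : ∀ k, ∀ t ∈ Set.Icc (0 : ℝ) 1, ∀ x,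
      ∑ y, (W0 x y + t * E x y) * ψ k t y
        = lam k t * ((∑ y, (W0 x y + t * E x y)) * ψ k t x))
    (horth : ∀ t ∈ Set.Icc (0 : ℝ) 1, ∀ k l,
      ∑ x, ψ k t x * (∑ y, (W0 x y + t * E x y)) * ψ l t x = if k = l then 1 else 0)
    (hlambound : ∀ k, ∀ t ∈ Set.Icc (0 : ℝ) 1, |lam k t| ≤ 1)
    (I : Finset V)
    (Δ : ℝ) (hΔ : 0 < Δ)
    (hgap0 : ∀ i ∈ I, ∀ j ∉ I, 2 * Δ ≤ |lam i 0 - lam j 0|)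
    (hC : Cconn / d0low ≤ Δ / 8) :
    ∀ t ∈ Set.Icc (0 : ℝ) 1, ∀ i ∈ I, ∀ j ∉ I, Δ ≤ |lam i t - lam j t| := by
  intro t ht i hi j hj
  have hdeg := rowSum_le_mul_rowSum_of_cross hdisj hEsymm hEnonneg hEcross hd0pos
    (fun x => hd0low ▸ inf'_le _ (mem_univ x)) (hCconn ▸ hC)
  have hgap := I_eigen_gap_preservation_general hW0symm hEsymm hEnonneg (by positivity) hdeg
    (fun k => continuousOn_pi.mpr fun x => (hψdiff k x).continuousOn)
    (fun k s hs => isNormalizedEigenpair_iff.mpr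
      ⟨heig k s hs, (horth s hs k k).trans (if_pos rfl)⟩)
    hlambound hgap0 t ht i hi j hj
  nlinarith [ht.2]
end

section
/- Suppose for each k = 1,…,n there are differentiable functions λ_k : [0,1] → ℝ and ψ_k : [0,1] → ℝ^V with W(t)ψ_k(t) = λ_k(t)D(t)ψ_k(t), ψ_k(t)ᵀD(t)ψ_j(t) = δ_{kj}, and |λ_k(t)| ≤ 1 for all t∈[0,1]; let I ⊆ {1,…,n}, S(x,t) = Σ_{k∈I} ψ_k(t)(x)², and S̄(t) = max_{x∈V} S(x,t). Assume |λ_k(t) − λ_j(t)| ≥ Δ > 0 for all k∈I, j∉I and all t∈[0,1], and that at every t ∈ (0,1) the evolution equation ∂S/∂t(x,t) = − Σ_{k,j∈I}(ψ_jᵀD'(t)ψ_k)ψ_k(x)ψ_j(x) + 2Σ_{k∈I,j∉I}[ψ_jᵀ(E−λ_k D'(t))ψ_k/(λ_k−λ_j)]ψ_k(x)ψ_j(x) holds, where D'(t) is the diagonal matrix with entries Σ_y E(x,y). Then for every x∈V and t∈[0,1], |S(x,t) − S(x,0)| ≤ C̃ · ∫₀ᵗ S̄(τ) dτ, where C̃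 = (1 + 4/Δ) · (2·C_conn/d0_low). -/
open Finset

/-!
Write `D'` for the diagonal matrix of row sums of `E`. At each time, `∂S/∂t (x, t)` is a
combination of sums `∑ k ∈ I, ∑ j ∈ J, c k j * (ψ_jᵀ A ψ_k) * ψ_k(x) * ψ_j(x)` with `A = E` or
`A = D'`, two nonnegative matrices of the same total mass `m = ∑ y, ∑ z, E y z`. Exchanging sums
turns each of them into a sum over pairs `(y, z)`, with weights `A y z`, of kernels bounded by
`max |c| * S̄(t) * max_y ∑ k, ψ_k(y)²`, thanks to `2|ab| ≤ a² + b²`. By Bessel's inequality the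
`D(t)`-orthonormality bounds the last factor by `1 / d0low`. The modes in `I` alone contribute
`c = 1`; the gap and the bound `|λ_k| ≤ 1`, which follows from the eigenvalue equation at a maximum
of `|ψ_k|`, give `|c| ≤ 1 / Δ` for each of the two mixed sums, which enter with a factor `2`. Hence
`|∂S/∂t| ≤ (1 + 4 / Δ) * (m / d0low) * S̄(t)`, and one integrates in time. When `E` is supported on
the edges between `B` and `C`, symmetry gives `m = 2 * Cconn`.
-/

section Embedding

variable {V κ : Type*}

/-- The spectral embedding norm `S(x)` of the modes `u k`, `k ∈ I`, at the vertex `x`. -/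
def embeddingNorm (I : Finset κ) (u : κ → V → ℝ) (x : V) : ℝ :=
  ∑ k ∈ I, u k x ^ 2

theorem embeddingNorm_mono {I J : Finset κ} (hIJ : I ⊆ J) (u : κ → V → ℝ) (x : V) :
    embeddingNorm I u x ≤ embeddingNorm J u x :=
  sum_le_sum_of_subset_of_nonneg hIJ fun k _ _ => sq_nonneg (u k x)

theorem continuousOn_embeddingNorm {X : Type*} [TopologicalSpace X] {s : Set X} {I : Finset κ}
    {ψ : κ → X → V → ℝ} {x : V} (hψ : ∀ k ∈ I, ContinuousOn (fun t => ψ k t x) s) :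
    ContinuousOn (fun t => embeddingNorm I (fun k => ψ k t) x) s :=
  continuousOn_finsetSum I fun k hk => (hψ k hk).pow 2

variable [Fintype V]

/-- The largest spectral embedding norm `S̄` over all vertices. -/
noncomputable def maxEmbeddingNorm [Nonempty V] (I : Finset κ) (u : κ → V → ℝ) : ℝ :=
  univ.sup' univ_nonempty (embeddingNorm I u)

/-- The degree of the vertex `x` for the edge weights `A`. -/
def weightedDegree (A : Matrix V V ℝ) (x : V) : ℝ :=
  ∑ y, A x y

/-- Orthonormality of the family `u` for the diagonal inner product with weights `d`, so that
`d = weightedDegree A` gives orthonormality with respect to the degree matrix of `A`. -/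
def IsWeightedOrthonormal [DecidableEq κ] (d : V → ℝ) (u : κ → V → ℝ) : Prop :=
  ∀ k l, ∑ x, u k x * d x * u l x = if k = l then 1 else 0

/-- The sum over pairs of modes in `I × J`, with coefficients `c`, of the interactions `u_jᵀ A u_k`
weighted by `u_k(x) u_j(x)`; the rate of change of the embedding norm is composed of such sums. -/
def modeCoupling (A : Matrix V V ℝ) (c : κ → κ → ℝ) (I J : Finset κ) (u : κ → V → ℝ)
    (x : V) : ℝ :=
  ∑ k ∈ I, ∑ j ∈ J, c k j * (∑ y, ∑ z, u j y * A y z * u k z) * u k x * u j x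

/-- The right-hand side of the evolution equation for the embedding norm at `x` of modes `u k` with
eigenvalues `μ k`, when the edge weights have time derivative `E`. -/
noncomputable def evolutionRate [Fintype κ] [DecidableEq κ] (E : Matrix V V ℝ) (μ : κ → ℝ)
    (u : κ → V → ℝ) (I : Finset κ) (x : V) : ℝ :=
  -(∑ k ∈ I, ∑ j ∈ I, (∑ y, u j y * weightedDegree E y * u k y) * u k x * u j x)
    + 2 * ∑ k ∈ I, ∑ j ∈ Iᶜ,
        (((∑ y, ∑ z, u j y * E y z * u k z) - μ k * (∑ y, u j y * weightedDegree E y * u k y))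
          / (μ k - μ j)) * u k x * u j x

theorem embeddingNorm_le_maxEmbeddingNorm [Nonempty V] (I : Finset κ) (u : κ → V → ℝ) (x : V) :
    embeddingNorm I u x ≤ maxEmbeddingNorm I u :=
  le_sup' (embeddingNorm I u) (mem_univ x)

theorem continuousOn_maxEmbeddingNorm [Nonempty V] {X : Type*} [TopologicalSpace X] {s : Set X}
    {I : Finset κ} {ψ : κ → X → V → ℝ} (hψ : ∀ k ∈ I, ∀ x, ContinuousOn (fun t => ψ k t x) s) :
    ContinuousOn (fun t => maxEmbeddingNorm I (fun k => ψ k t)) s :=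
  ContinuousOn.finset_sup'_apply univ_nonempty fun x _ =>
    continuousOn_embeddingNorm fun k hk => hψ k hk x

theorem weightedDegree_nonneg {A : Matrix V V ℝ} (hA : ∀ x y, 0 ≤ A x y) (x : V) :
    0 ≤ weightedDegree A x :=
  sum_nonneg fun y _ => hA x y

theorem weightedDegree_le_weightedDegree_add_smul (A : Matrix V V ℝ) {E : Matrix V V ℝ}
    (hE : ∀ x y, 0 ≤ E x y) {t : ℝ} (ht : 0 ≤ t) (x : V) :
    weightedDegree A x ≤ weightedDegree (A + t • E) x :=
  sum_le_sum fun y _ => le_add_of_nonneg_right (mul_nonneg ht (hE x y))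

theorem weightedDegree_diagonal [DecidableEq V] (d : V → ℝ) :
    weightedDegree (Matrix.diagonal d) = d := by
  funext x
  simp [weightedDegree, Matrix.diagonal_apply]

theorem sum_sum_mul_diagonal_mul [DecidableEq V] (d f g : V → ℝ) :
    ∑ y, ∑ z, f y * Matrix.diagonal d y z * g z = ∑ y, f y * d y * g y := by
  simp [Matrix.diagonal_apply]

theorem sum_weightedDegree_eq_two_mul_of_bipartite [DecidableEq V] {B C : Finset V}
    (hdisj : Disjoint B C) (hunion : B ∪ C = univ) {E : Matrix V V ℝ} (hE : E.IsSymm)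
    (hcross : ∀ x y, ¬((x ∈ B ∧ y ∈ C) ∨ (x ∈ C ∧ y ∈ B)) → E x y = 0) :
    ∑ x, weightedDegree E x = 2 * ∑ x ∈ B, ∑ y ∈ C, E x y := by
  have hB : ∀ x ∈ B, weightedDegree E x = ∑ y ∈ C, E x y := fun x hx =>
    (sum_subset (subset_univ C) fun y _ hy => hcross x y (by
      have := disjoint_left.mp hdisj hx
      tauto)).symm
  have hC : ∀ x ∈ C, weightedDegree E x = ∑ y ∈ B, E x y := fun x hx =>
    (sum_subset (subset_univ B) fun y _ hy => hcross x y (by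
      have := disjoint_right.mp hdisj hx
      tauto)).symm
  rw [← hunion, sum_union hdisj, sum_congr rfl hB, sum_congr rfl hC, two_mul]
  refine congrArg _ (sum_comm.trans ?_)
  simp only [hE.apply]

theorem abs_le_one_of_mulVec_eq_mul_weightedDegree {A : Matrix V V ℝ} (hA : ∀ x y, 0 ≤ A x y)
    (hdeg : ∀ x, 0 < weightedDegree A x) {μ : ℝ} {u : V → ℝ} (hu : u ≠ 0)
    (heig : ∀ x, A.mulVec u x = μ * (weightedDegree A x * u x)) :
    |μ| ≤ 1 := by
  obtain ⟨x₀, hx₀⟩ := Function.ne_iff.mp hu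
  have : Nonempty V := ⟨x₀⟩
  obtain ⟨x, hmax⟩ := Finite.exists_max fun y => |u y|
  have hpos : 0 < weightedDegree A x * |u x| :=
    mul_pos (hdeg x) ((abs_pos.mpr hx₀).trans_le (hmax x₀))
  refine le_of_mul_le_mul_right ?_ hpos
  calc |μ| * (weightedDegree A x * |u x|) = |∑ y, A x y * u y| := by
        rw [← abs_of_pos (hdeg x), ← abs_mul, ← abs_mul, ← heig x]
        rfl
    _ ≤ ∑ y, |A x y * u y| := abs_sum_le_sum_abs _ _
    _ ≤ ∑ y, A x y * |u x| := sum_le_sum fun y _ => by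
        rw [abs_mul, abs_of_nonneg (hA x y)]
        exact mul_le_mul_of_nonneg_left (hmax y) (hA x y)
    _ = 1 * (weightedDegree A x * |u x|) := by rw [one_mul, weightedDegree, sum_mul]

section Orthonormal

variable [DecidableEq κ] {d : V → ℝ} {u : κ → V → ℝ}

theorem IsWeightedOrthonormal.ne_zero (hu : IsWeightedOrthonormal d u) (k : κ) : u k ≠ 0 := by
  intro h
  simpa [h] using hu k k

theorem IsWeightedOrthonormal.mul_embeddingNorm_le_one (hu : IsWeightedOrthonormal d u)
    (hd : ∀ x, 0 ≤ d x) (I : Finset κ) (x : V) :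
    d x * embeddingNorm I u x ≤ 1 := by
  classical
  let v : κ → EuclideanSpace ℝ V := fun k => WithLp.toLp 2 fun y => √(d y) * u k y
  have hv : Orthonormal ℝ v := by
    refine orthonormal_iff_ite.mpr fun k l => (sum_congr rfl fun y _ => ?_).trans (hu k l)
    calc √(d y) * u l y * (√(d y) * u k y) = √(d y) * √(d y) * (u k y * u l y) := by ring
      _ = u k y * d y * u l y := by rw [Real.mul_self_sqrt (hd y)]; ring
  have hbessel := hv.sum_inner_products_le (s := I) (EuclideanSpace.single x 1)
  simpa [v, EuclideanSpace.inner_single_right, embeddingNorm, mul_pow, mul_sum, abs_of_nonneg,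
    Real.sq_sqrt (hd x)] using hbessel

theorem IsWeightedOrthonormal.embeddingNorm_le_one_div (hu : IsWeightedOrthonormal d u) {δ : ℝ}
    (hδ : 0 < δ) (hd : ∀ x, δ ≤ d x) (I : Finset κ) (x : V) :
    embeddingNorm I u x ≤ 1 / δ := by
  rw [le_div_iff₀' hδ]
  calc δ * embeddingNorm I u x ≤ d x * embeddingNorm I u x :=
        mul_le_mul_of_nonneg_right (hd x) (sum_nonneg fun k _ => sq_nonneg (u k x))
    _ ≤ 1 := hu.mul_embeddingNorm_le_one (fun y => hδ.le.trans (hd y)) I x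

end Orthonormal

theorem sum_abs_mul_le_of_sum_sq_le {ι : Type*} {s : Finset ι} {f g : ι → ℝ} {M : ℝ}
    (hf : ∑ i ∈ s, f i ^ 2 ≤ M) (hg : ∑ i ∈ s, g i ^ 2 ≤ M) :
    ∑ i ∈ s, |f i * g i| ≤ M := by
  have hamgm : ∀ i ∈ s, |f i * g i| ≤ (f i ^ 2 + g i ^ 2) / 2 := fun i _ => by
    rw [abs_mul, ← sq_abs (f i), ← sq_abs (g i)]
    linarith [two_mul_le_add_sq |f i| |g i|]
  calc ∑ i ∈ s, |f i * g i| ≤ (∑ i ∈ s, f i ^ 2 + ∑ i ∈ s, g i ^ 2) / 2 := by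
        rw [← sum_add_distrib, sum_div]
        exact sum_le_sum hamgm
    _ ≤ M := by linarith

theorem abs_sum_sum_mul_le {ι ι' : Type*} {s : Finset ι} {s' : Finset ι'} {c : ι → ι' → ℝ}
    {f : ι → ℝ} {g : ι' → ℝ} {L : ℝ} (hc : ∀ i ∈ s, ∀ j ∈ s', |c i j| ≤ L) :
    |∑ i ∈ s, ∑ j ∈ s', c i j * (f i * g j)| ≤ L * ((∑ i ∈ s, |f i|) * ∑ j ∈ s', |g j|) :=
  calc |∑ i ∈ s, ∑ j ∈ s', c i j * (f i * g j)|
      ≤ ∑ i ∈ s, |∑ j ∈ s', c i j * (f i * g j)| := abs_sum_le_sum_abs _ _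
    _ ≤ ∑ i ∈ s, ∑ j ∈ s', |c i j * (f i * g j)| :=
        sum_le_sum fun _ _ => abs_sum_le_sum_abs _ _
    _ ≤ ∑ i ∈ s, ∑ j ∈ s', L * (|f i| * |g j|) :=
        sum_le_sum fun i hi => sum_le_sum fun j hj => by
          rw [abs_mul, abs_mul]
          exact mul_le_mul_of_nonneg_right (hc i hi j hj) (by positivity)
    _ = L * ((∑ i ∈ s, |f i|) * ∑ j ∈ s', |g j|) := by
        rw [sum_mul_sum]
        simp only [mul_sum]

theorem modeCoupling_eq_sum_weight_mul (A : Matrix V V ℝ) (c : κ → κ → ℝ) (I J : Finset κ)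
    (u : κ → V → ℝ) (x : V) :
    modeCoupling A c I J u x
      = ∑ y, ∑ z, A y z * ∑ k ∈ I, ∑ j ∈ J, c k j * ((u k z * u k x) * (u j y * u j x)) := by
  simp only [modeCoupling, mul_sum, sum_mul]
  simp_rw [sum_comm (s := J), sum_comm (s := I)]
  refine sum_congr rfl fun y _ => sum_congr rfl fun z _ => sum_congr rfl fun k _ =>
    sum_congr rfl fun j _ => ?_
  ring

theorem abs_modeCoupling_le {A : Matrix V V ℝ} (hA : ∀ y z, 0 ≤ A y z) {c : κ → κ → ℝ}
    {I J : Finset κ} {u : κ → V → ℝ} {L M N : ℝ} (hL : 0 ≤ L)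
    (hc : ∀ k ∈ I, ∀ j ∈ J, |c k j| ≤ L) (hM : ∀ y, embeddingNorm I u y ≤ M)
    (hN : ∀ y, embeddingNorm J u y ≤ N) (x : V) :
    |modeCoupling A c I J u x| ≤ L * (M * N) * ∑ y, weightedDegree A y := by
  have hM₀ : 0 ≤ M := (sum_nonneg fun k _ => sq_nonneg (u k x)).trans (hM x)
  have hkernel : ∀ y z, |∑ k ∈ I, ∑ j ∈ J, c k j * ((u k z * u k x) * (u j y * u j x))|
      ≤ L * (M * N) := fun y z =>
    (abs_sum_sum_mul_le hc).trans <| mul_le_mul_of_nonneg_left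
      (mul_le_mul (sum_abs_mul_le_of_sum_sq_le (hM z) (hM x))
        (sum_abs_mul_le_of_sum_sq_le (hN y) (hN x)) (sum_nonneg fun _ _ => abs_nonneg _) hM₀) hL
  rw [modeCoupling_eq_sum_weight_mul, mul_sum]
  refine (abs_sum_le_sum_abs _ _).trans (sum_le_sum fun y _ => ?_)
  rw [weightedDegree, mul_sum]
  refine (abs_sum_le_sum_abs _ _).trans (sum_le_sum fun z _ => ?_)
  rw [abs_mul, abs_of_nonneg (hA y z), mul_comm]
  exact mul_le_mul_of_nonneg_right (hkernel y z) (hA y z)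

section EvolutionRate

variable [Fintype κ] [DecidableEq κ]

theorem evolutionRate_eq_modeCoupling [DecidableEq V] (E : Matrix V V ℝ) (μ : κ → ℝ)
    (u : κ → V → ℝ) (I : Finset κ) (x : V) :
    evolutionRate E μ u I x
      = -modeCoupling (Matrix.diagonal (weightedDegree E)) (fun _ _ => 1) I I u x
        + 2 * (modeCoupling E (fun k j => (μ k - μ j)⁻¹) I Iᶜ u x
          - modeCoupling (Matrix.diagonal (weightedDegree E)) (fun k j => μ k * (μ k - μ j)⁻¹)
              I Iᶜ u x) := by
  simp only [evolutionRate, modeCoupling, sum_sum_mul_diagonal_mul, one_mul, ← sum_sub_distrib]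
  congr 2
  refine sum_congr rfl fun k _ => sum_congr rfl fun j _ => ?_
  rw [div_eq_mul_inv]
  ring

theorem abs_evolutionRate_le {E : Matrix V V ℝ} (hE : ∀ y z, 0 ≤ E y z) {μ : κ → ℝ}
    {u : κ → V → ℝ} {I : Finset κ} {Δ Λ M N : ℝ} (hΔ : 0 < Δ) (hΛ : 0 ≤ Λ)
    (hμ : ∀ k ∈ I, |μ k| ≤ Λ) (hgap : ∀ k ∈ I, ∀ j ∉ I, Δ ≤ |μ k - μ j|)
    (hM : ∀ y, embeddingNorm I u y ≤ M) (hN : ∀ y, embeddingNorm univ u y ≤ N) (x : V) :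
    |evolutionRate E μ u I x|
      ≤ (1 + 2 * (1 + Λ) / Δ) * (M * N) * ∑ y, weightedDegree E y := by
  classical
  set D' := Matrix.diagonal (weightedDegree E)
  have hD' : ∀ y z, 0 ≤ D' y z := fun y z => by
    by_cases hyz : y = z
    · simpa [D', hyz] using weightedDegree_nonneg hE z
    · simp [D', hyz]
  have hNsub : ∀ J y, embeddingNorm J u y ≤ N := fun J y =>
    (embeddingNorm_mono (subset_univ J) u y).trans (hN y)
  have hinv : ∀ k ∈ I, ∀ j ∈ Iᶜ, |(μ k - μ j)⁻¹| ≤ Δ⁻¹ := fun k hk j hj => by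
    rw [abs_inv]
    exact inv_anti₀ hΔ (hgap k hk j (mem_compl.mp hj))
  have hquot : ∀ k ∈ I, ∀ j ∈ Iᶜ, |μ k * (μ k - μ j)⁻¹| ≤ Λ * Δ⁻¹ := fun k hk j hj => by
    rw [abs_mul]
    exact mul_le_mul (hμ k hk) (hinv k hk j hj) (abs_nonneg _) hΛ
  have hinner := abs_modeCoupling_le hD' zero_le_one (c := fun _ _ => 1)
    (fun _ _ _ _ => abs_one.le) hM (hNsub I) x
  have hadj := abs_modeCoupling_le hE (inv_nonneg.mpr hΔ.le) hinv hM (hNsub Iᶜ) x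
  have hdeg := abs_modeCoupling_le hD' (by positivity) hquot hM (hNsub Iᶜ) x
  rw [weightedDegree_diagonal] at hinner hdeg
  rw [evolutionRate_eq_modeCoupling]
  set m := ∑ y, weightedDegree E y
  calc |-modeCoupling D' (fun _ _ => 1) I I u x
          + 2 * (modeCoupling E (fun k j => (μ k - μ j)⁻¹) I Iᶜ u x
            - modeCoupling D' (fun k j => μ k * (μ k - μ j)⁻¹) I Iᶜ u x)|
      ≤ 1 * (M * N) * m + 2 * (Δ⁻¹ * (M * N) * m + Λ * Δ⁻¹ * (M * N) * m) := by
        rw [abs_le] at hinner hadj hdeg ⊢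
        constructor <;> linarith
    _ = (1 + 2 * (1 + Λ) / Δ) * (M * N) * m := by ring

end EvolutionRate

end Embedding

theorem abs_sub_le_integral_of_abs_hasDerivAt_le {f f' φ : ℝ → ℝ} {a b : ℝ} (hab : a ≤ b)
    (hf : ContinuousOn f (Set.Icc a b)) (hφ : MeasureTheory.IntegrableOn φ (Set.Icc a b))
    (hderiv : ∀ s ∈ Set.Ioo a b, HasDerivAt f (f' s) s)
    (hbound : ∀ s ∈ Set.Ioo a b, |f' s| ≤ φ s) :
    |f b - f a| ≤ ∫ s in a..b, φ s := by
  have hupper : f b - f a ≤ ∫ s in a..b, φ s :=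
    intervalIntegral.sub_le_integral_of_hasDeriv_right_of_le hab hf
      (fun s hs => (hderiv s hs).hasDerivWithinAt) hφ
      (fun s hs => (le_abs_self _).trans (hbound s hs))
  have hlower : -f b - -f a ≤ ∫ s in a..b, φ s :=
    intervalIntegral.sub_le_integral_of_hasDeriv_right_of_le hab hf.neg
      (fun s hs => (hderiv s hs).neg.hasDerivWithinAt) hφ
      (fun s hs => (neg_le_abs _).trans (hbound s hs))
  exact abs_le.mpr ⟨by linarith, hupper⟩

theorem embedding_norm_stability_general {V κ : Type*} [Fintype V] [Nonempty V] [Fintype κ]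
    [DecidableEq κ] {W0 E : Matrix V V ℝ} (hW0 : ∀ x y, 0 ≤ W0 x y) (hE : ∀ x y, 0 ≤ E x y)
    {d0low : ℝ} (hd0pos : 0 < d0low) (hd0low : ∀ x, d0low ≤ weightedDegree W0 x)
    {T : ℝ} {lam : κ → ℝ → ℝ} {ψ : κ → ℝ → V → ℝ} {I : Finset κ} {Δ : ℝ} (hΔ : 0 < Δ)
    (hψ : ∀ k ∈ I, ∀ x, ContinuousOn (fun s => ψ k s x) (Set.Icc 0 T))
    (heig : ∀ k, ∀ t ∈ Set.Icc 0 T, ∀ x,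
      (W0 + t • E).mulVec (ψ k t) x = lam k t * (weightedDegree (W0 + t • E) x * ψ k t x))
    (horth : ∀ t ∈ Set.Icc 0 T,
      IsWeightedOrthonormal (weightedDegree (W0 + t • E)) fun k => ψ k t)
    (hgap : ∀ t ∈ Set.Icc 0 T, ∀ k ∈ I, ∀ j ∉ I, Δ ≤ |lam k t - lam j t|)
    (hevol : ∀ x, ∀ t ∈ Set.Ioo 0 T, HasDerivAt (fun s => embeddingNorm I (fun k => ψ k s) x)
      (evolutionRate E (fun k => lam k t) (fun k => ψ k t) I x) t)
    (x : V) {t : ℝ} (ht : t ∈ Set.Icc 0 T) :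
    |embeddingNorm I (fun k => ψ k t) x - embeddingNorm I (fun k => ψ k 0) x|
      ≤ ((1 + 4 / Δ) * ((∑ y, weightedDegree E y) / d0low))
          * ∫ τ in (0 : ℝ)..t, maxEmbeddingNorm I fun k => ψ k τ := by
  have hsub : Set.Icc 0 t ⊆ Set.Icc 0 T := Set.Icc_subset_Icc_right ht.2
  have hmax : ContinuousOn (fun τ => maxEmbeddingNorm I fun k => ψ k τ) (Set.Icc 0 t) :=
    continuousOn_maxEmbeddingNorm fun k hk y => (hψ k hk y).mono hsub
  rw [← intervalIntegral.integral_const_mul]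
  refine abs_sub_le_integral_of_abs_hasDerivAt_le ht.1
    (continuousOn_embeddingNorm fun k hk => (hψ k hk x).mono hsub)
    (continuousOn_const.mul hmax).integrableOn_Icc
    (fun s hs => hevol x s ⟨hs.1, hs.2.trans_le ht.2⟩) fun s hs => ?_
  have hs' : s ∈ Set.Icc 0 T := hsub (Set.Ioo_subset_Icc_self hs)
  have hdeg : ∀ y, d0low ≤ weightedDegree (W0 + s • E) y := fun y =>
    (hd0low y).trans (weightedDegree_le_weightedDegree_add_smul W0 hE hs'.1 y)
  have hlam : ∀ k, |lam k s| ≤ 1 := fun k =>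
    abs_le_one_of_mulVec_eq_mul_weightedDegree
      (fun y z => add_nonneg (hW0 y z) (mul_nonneg hs'.1 (hE y z)))
      (fun y => hd0pos.trans_le (hdeg y)) ((horth s hs').ne_zero k) (heig k s hs')
  refine (abs_evolutionRate_le hE hΔ zero_le_one (fun k _ => hlam k) (hgap s hs')
    (embeddingNorm_le_maxEmbeddingNorm I _)
    ((horth s hs').embeddingNorm_le_one_div hd0pos hdeg univ) x).trans_eq ?_
  ring

/-- Stability of the spectral embedding norm. In the deformation
`W(t) = W0 + tE` with differentiable `D(t)`-orthonormal eigenpairs `(λ_k, ψ_k)` (indexed by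
`k : V`), `|λ_k(t)| ≤ 1`, an `I`-eigen-gap `|λ_k(t) − λ_j(t)| ≥ Δ > 0` for `k ∈ I`,
`j ∉ I` on `[0,1]`, and the evolution equation for `S(x,t) = ∑_{k∈I} ψ_k(t)(x)²` holding on
`(0,1)`, one has `|S(x,t) − S(x,0)| ≤ C̃ ∫₀ᵗ S̄(τ)dτ` with
`C̃ = (1 + 4/Δ)(2 C_conn/d0low)` and `S̄(τ) = max_x S(x,τ)`. -/
theorem embedding_norm_stability
    {V : Type*} [Fintype V] [DecidableEq V] [Nonempty V]
    (B C : Finset V) (hdisj : Disjoint B C) (hunion : B ∪ C = Finset.univ)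
    (hBne : B.Nonempty) (hCne : C.Nonempty)
    (W0 E : Matrix V V ℝ)
    (hW0symm : W0.IsSymm) (hW0nonneg : ∀ x y, 0 ≤ W0 x y)
    (hW0cross : ∀ x y, ((x ∈ B ∧ y ∈ C) ∨ (x ∈ C ∧ y ∈ B)) → W0 x y = 0)
    (hEsymm : E.IsSymm) (hEnonneg : ∀ x y, 0 ≤ E x y)
    (hEcross : ∀ x y, ¬((x ∈ B ∧ y ∈ C) ∨ (x ∈ C ∧ y ∈ B)) → E x y = 0)
    (Cconn : ℝ) (hCconn : Cconn = ∑ x ∈ B, ∑ y ∈ C, E x y)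
    (d0low : ℝ)
    (hd0low : d0low = Finset.univ.inf' Finset.univ_nonempty (fun x => ∑ y, W0 x y))
    (hd0pos : 0 < d0low)
    (lam : V → ℝ → ℝ) (ψ : V → ℝ → V → ℝ)
    (hlamdiff : ∀ k, DifferentiableOn ℝ (lam k) (Set.Icc (0 : ℝ) 1))
    (hψdiff : ∀ k x, DifferentiableOn ℝ (fun s => ψ k s x) (Set.Icc (0 : ℝ) 1))
    (heig : ∀ k, ∀ t ∈ Set.Icc (0 : ℝ) 1, ∀ x,
      ∑ y, (W0 x y + t * E x y) * ψ k t y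
        = lam k t * ((∑ y, (W0 x y + t * E x y)) * ψ k t x))
    (horth : ∀ t ∈ Set.Icc (0 : ℝ) 1, ∀ k l,
      ∑ x, ψ k t x * (∑ y, (W0 x y + t * E x y)) * ψ l t x = if k = l then 1 else 0)
    (hlambound : ∀ k, ∀ t ∈ Set.Icc (0 : ℝ) 1, |lam k t| ≤ 1)
    (I : Finset V)
    (Δ : ℝ) (hΔ : 0 < Δ)
    (hgap : ∀ t ∈ Set.Icc (0 : ℝ) 1, ∀ k ∈ I, ∀ j ∉ I, Δ ≤ |lam k t - lam j t|)
    -- the evolution equation of S(x,t) on (0,1)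
    (hevol : ∀ x, ∀ t ∈ Set.Ioo (0 : ℝ) 1,
      HasDerivAt (fun s => ∑ k ∈ I, (ψ k s x) ^ 2)
        (-(∑ k ∈ I, ∑ j ∈ I, (∑ y, ψ j t y * (∑ z, E y z) * ψ k t y) * ψ k t x * ψ j t x)
          + 2 * ∑ k ∈ I, ∑ j ∈ Iᶜ,
              (((∑ y, ∑ z, ψ j t y * E y z * ψ k t z)
                  - lam k t * (∑ y, ψ j t y * (∑ z, E y z) * ψ k t y))
                / (lam k t - lam j t)) * ψ k t x * ψ j t x) t) :
    ∀ x, ∀ t ∈ Set.Icc (0 : ℝ) 1,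
      |(∑ k ∈ I, (ψ k t x) ^ 2) - ∑ k ∈ I, (ψ k 0 x) ^ 2|
        ≤ ((1 + 4 / Δ) * (2 * Cconn / d0low))
            * ∫ τ in (0 : ℝ)..t,
                Finset.univ.sup' Finset.univ_nonempty (fun y => ∑ k ∈ I, (ψ k τ y) ^ 2) := by
  intro x t ht
  rw [hCconn, ← sum_weightedDegree_eq_two_mul_of_bipartite hdisj hunion hEsymm hEcross]
  exact embedding_norm_stability_general hW0nonneg hEnonneg hd0pos
    (fun y => hd0low.trans_le (inf'_le _ (mem_univ y))) hΔ
    (fun k _ y => (hψdiff k y).continuousOn) heig horth hgap hevol x ht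
end
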